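/- Let G be a finite abelian group with |G| > 2. Then max Δ*(G) = max { exp(G) − 2, r(G) − 1 }. -/

import Mathlib

open Multiset

section Defs

variable {G : Type*} [AddCommGroup G]

/-- `S` is a zero-sum sequence over `G₀`: a multiset with entries in `G₀` and sum `0`. -/
def IsZeroSumSeq (G₀ : Set G) (S : Multiset G) : Prop :=
  (∀ x ∈ S, x ∈ G₀) ∧ S.sum = 0

/-- `S` is an atom over `G₀`: a nonempty zero-sum sequence over `G₀` that is not the
union of two nonempty zero-sum sequences over `G₀`. -/
def IsAtomSeq (G₀ : Set G) (S : Multiset G) : Prop :=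
  IsZeroSumSeq G₀ S ∧ S ≠ 0 ∧
    ∀ A B : Multiset G, IsZeroSumSeq G₀ A → IsZeroSumSeq G₀ B →
      A ≠ 0 → B ≠ 0 → S ≠ A + B

/-- The set of lengths of `B`: all `k` such that `B` is a union of `k` atoms over `G₀`. -/
def LengthSet (G₀ : Set G) (B : Multiset G) : Set ℕ :=
  {k | ∃ l : Multiset (Multiset G), Multiset.card l = k ∧
      (∀ A ∈ l, IsAtomSeq G₀ A) ∧ l.sum = B}

/-- The set of successive distances of a set of naturals. -/
def DeltaOf (L : Set ℕ) : Set ℕ :=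
  {d | ∃ x ∈ L, ∃ y ∈ L, x < y ∧ y - x = d ∧ ∀ z ∈ L, ¬(x < z ∧ z < y)}

/-- The set of distances `Δ(G₀)`. -/
def DeltaSet (G₀ : Set G) : Set ℕ :=
  {d | ∃ B : Multiset G, IsZeroSumSeq G₀ B ∧ B ≠ 0 ∧ d ∈ DeltaOf (LengthSet G₀ B)}

/-- `G₀` is half-factorial if `Δ(G₀) = ∅`. -/
def IsHalfFactorialSet (G₀ : Set G) : Prop := DeltaSet G₀ = ∅

/-- `G₀` is minimal non-half-factorial if `Δ(G₀) ≠ ∅` and every proper subset is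
half-factorial. -/
def IsMinNonHalfFactorial (G₀ : Set G) : Prop :=
  (DeltaSet G₀).Nonempty ∧ ∀ G₁ : Set G, G₁ ⊂ G₀ → DeltaSet G₁ = ∅

/-- The cross number `k(S) = Σ 1/ord(g)` of a multiset over `G`. -/
noncomputable def crossNumber (S : Multiset G) : ℚ :=
  (S.map (fun g => ((addOrderOf g : ℚ))⁻¹)).sum

/-- `G₀` is an LCN-set if every atom over `G₀` has cross number at least 1. -/
def IsLCNSet (G₀ : Set G) : Prop :=
  ∀ U : Multiset G, IsAtomSeq G₀ U → 1 ≤ crossNumber U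

/-- A subset of `G \ {0}` is independent if any integral linear relation on its elements
has all summands zero. -/
def IsIndependentSet (E : Set G) : Prop :=
  (0 : G) ∉ E ∧ ∀ s : Finset G, ↑s ⊆ E → ∀ f : G → ℤ,
    (∑ e ∈ s, f e • e) = 0 → ∀ e ∈ s, f e • e = 0

/-- `d` is a greatest common divisor of the set `S` of naturals. -/
def IsSetGcd (S : Set ℕ) (d : ℕ) : Prop :=
  (∀ s ∈ S, d ∣ s) ∧ ∀ e : ℕ, (∀ s ∈ S, e ∣ s) → e ∣ d

end Defs

/-- The set of minimal distances `Δ*(G)`. -/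
def DeltaStar (G : Type*) [AddCommGroup G] : Set ℕ :=
  {d | ∃ G₀ : Set G, (DeltaSet G₀).Nonempty ∧ d = sInf (DeltaSet G₀)}

/-- The `p`-rank of a finite abelian group: `log_p` of the order of the `p`-torsion
subgroup `{x | p • x = 0}`. -/
noncomputable def pRank (G : Type*) [AddCommGroup G] (p : ℕ) : ℕ :=
  Nat.log p (Nat.card {x : G // p • x = 0})

/-- The rank of a finite abelian group: the maximum of the `p`-ranks over all primes. -/
noncomputable def rankG (G : Type*) [AddCommGroup G] : ℕ :=
  sSup {r : ℕ | ∃ p : ℕ, p.Prime ∧ r = pRank G p}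

/-!
Write `k(S) = ∑ 1 / ord(g)` for the cross number, `n = exp(G)` and `r = r(G)`.

*Upper bound.* If `Δ(G₀) ≠ ∅`, some atom has cross number different from `1`. If `k(U) < 1`, then
`U ^ n` is also a product of `n * k(U) < n` atoms `g ^ ord(g)`, which yields a distance of at most
`n - 2`. Otherwise choose `U` with `k(U) > 1` and support `X` of minimal size. As `U` divides the
product of the `|X|` atoms `g ^ ord(g)`, `g ∈ X`, and the other atoms have cross number at least
`1`, there is a distance of at most `|X| - 2`, which settles the case `|X| ≤ r + 1`. If
`|X| ≥ r + 2`, then for every prime `p` some multiple, prime to `p`, of the part of `U` at a fixed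
`h ∈ X` can be completed to a zero-sum sequence on fewer than `|X|` elements. By minimality of `X`
these sequences are products of atoms of cross number `1`, and combining them over all `p` gives
such a product `W` for which `U * W` is one as well, hence a product of `k(U) + k(W) > k(W) + 1`
atoms. But if all distances exceeded `n - 2`, cancelling the `k(W)` atoms of `W`, each of length at
most `n`, one at a time would shorten a factorization by at most one atom each, leaving `U` with a
factorization into more than one atom.

*Lower bound.* If every atom over `G₀` has the same weight `c` for some `w : G → M`, all distances
are multiples of the order of `c`. Suitable weights modulo `n * (n - 2)` for `{g, -g}` with
`ord(g) = n`, and modulo `p * (r - 1)` for independent elements `e i` of order `p` together with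
their sum, realize the distances `n - 2` and `r - 1`.
-/

section ZeroSum

variable {G : Type*} [AddCommGroup G] {G₀ G₁ : Set G} {A B U : Multiset G} {g : G}

namespace IsZeroSumSeq

lemma zero : IsZeroSumSeq G₀ 0 := by simp [IsZeroSumSeq]

lemma add (hA : IsZeroSumSeq G₀ A) (hB : IsZeroSumSeq G₀ B) : IsZeroSumSeq G₀ (A + B) :=
  ⟨fun x hx => (mem_add.1 hx).elim (hA.1 x) (hB.1 x), by rw [sum_add, hA.2, hB.2, add_zero]⟩

lemma of_le (hB : IsZeroSumSeq G₀ B) (hAB : A ≤ B) (hA : A.sum = 0) : IsZeroSumSeq G₀ A :=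
  ⟨fun x hx => hB.1 x (mem_of_le hAB hx), hA⟩

lemma right_of_add (hAB : IsZeroSumSeq G₀ (A + B)) (hA : A.sum = 0) : IsZeroSumSeq G₀ B :=
  hAB.of_le (le_add_left _ _) (by simpa [hA] using hAB.2)

end IsZeroSumSeq

namespace IsAtomSeq

lemma eq_of_le (hU : IsAtomSeq G₀ U) (hAU : A ≤ U) (hA : A.sum = 0) (hA₀ : A ≠ 0) : A = U := by
  obtain ⟨B, rfl⟩ := Multiset.le_iff_exists_add.1 hAU
  have hB : B = 0 := by
    by_contra hB₀
    exact hU.2.2 A B (hU.1.of_le hAU hA) (hU.1.right_of_add hA) hA₀ hB₀ rfl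
  rw [hB, add_zero]

lemma mono (hU : IsAtomSeq G₁ U) (h : ∀ x ∈ U, x ∈ G₀) : IsAtomSeq G₀ U := by
  refine ⟨⟨h, hU.1.2⟩, hU.2.1, ?_⟩
  rintro A B hA - hA₀ hB₀ rfl
  exact hB₀ (left_eq_add.1 (hU.eq_of_le (le_add_right A B) hA.2 hA₀))

lemma eq_replicate_of_forall_mem (hU : IsAtomSeq G₀ U) (h : ∀ x ∈ U, x = g) :
    U = replicate (addOrderOf g) g := by
  have hrep : U = replicate (card U) g := eq_replicate.2 ⟨rfl, h⟩
  have hdvd : addOrderOf g ∣ card U := addOrderOf_dvd_of_nsmul_eq_zero (by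
    rw [← sum_replicate, ← hrep, hU.1.2])
  have hpos : 0 < card U := card_pos.2 hU.2.1
  refine (hU.eq_of_le ?_ (by simp) ?_).symm
  · rw [hrep]
    exact (replicate_le_replicate g).2 (Nat.le_of_dvd hpos hdvd)
  · exact card_pos.1 (by simpa using Nat.pos_of_dvd_of_pos hdvd hpos)

lemma eq_replicate_of_addOrderOf_le_count [DecidableEq G] (hU : IsAtomSeq G₀ U)
    (hg : IsOfFinAddOrder g) (h : addOrderOf g ≤ U.count g) : U = replicate (addOrderOf g) g :=
  (hU.eq_of_le (le_count_iff_replicate_le.1 h) (by simp)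
    (card_pos.1 (by simpa using hg.addOrderOf_pos))).symm

lemma count_le_addOrderOf [DecidableEq G] (hU : IsAtomSeq G₀ U) (hg : IsOfFinAddOrder g) :
    U.count g ≤ addOrderOf g := by
  by_contra! hlt
  rw [hU.eq_replicate_of_addOrderOf_le_count hg hlt.le, count_replicate_self] at hlt
  exact hlt.false

end IsAtomSeq

end ZeroSum

section Factorization

variable {G : Type*} [AddCommGroup G] {G₀ : Set G} {A B B₁ B₂ U : Multiset G}
  {l l₁ l₂ : Multiset (Multiset G)} {g : G}

/-- `l` is a factorization of `B` into atoms over `G₀`, so that `LengthSet G₀ B` consists of the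
cardinalities of the factorizations of `B`. -/
structure IsFactorization (G₀ : Set G) (B : Multiset G) (l : Multiset (Multiset G)) : Prop where
  isAtomSeq : ∀ A ∈ l, IsAtomSeq G₀ A
  sum_eq : l.sum = B

namespace IsFactorization

lemma zero : IsFactorization G₀ 0 0 := ⟨by simp, by simp⟩

lemma singleton (hA : IsAtomSeq G₀ A) : IsFactorization G₀ A {A} :=
  ⟨by simpa using hA, sum_singleton A⟩

lemma replicate (hA : IsAtomSeq G₀ A) (n : ℕ) :
    IsFactorization G₀ (n • A) (Multiset.replicate n A) :=
  ⟨fun _ hx => eq_of_mem_replicate hx ▸ hA, sum_replicate n A⟩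

lemma add (h₁ : IsFactorization G₀ B₁ l₁) (h₂ : IsFactorization G₀ B₂ l₂) :
    IsFactorization G₀ (B₁ + B₂) (l₁ + l₂) :=
  ⟨fun A hA => (mem_add.1 hA).elim (h₁.isAtomSeq A) (h₂.isAtomSeq A), by
    rw [sum_add, h₁.sum_eq, h₂.sum_eq]⟩

lemma cons (hA : IsAtomSeq G₀ A) (h : IsFactorization G₀ B l) :
    IsFactorization G₀ (A + B) (A ::ₘ l) :=
  (singleton hA).add h

lemma mono {G₁ : Set G} (h : IsFactorization G₀ B l) (hG : G₀ ⊆ G₁) : IsFactorization G₁ B l :=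
  ⟨fun A hA => (h.isAtomSeq A hA).mono fun x hx => hG ((h.isAtomSeq A hA).1.1 x hx), h.sum_eq⟩

lemma isZeroSumSeq (h : IsFactorization G₀ B l) : IsZeroSumSeq G₀ B :=
  h.sum_eq ▸ sum_induction (IsZeroSumSeq G₀) l (fun _ _ => .add) .zero
    fun A hA => (h.isAtomSeq A hA).1

lemma eq_zero (h : IsFactorization G₀ 0 l) : l = 0 :=
  eq_zero_of_forall_notMem fun A hA =>
    (h.isAtomSeq A hA).2.1 (Multiset.le_zero.1 (h.sum_eq ▸ le_sum_of_mem hA))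

lemma card_eq_one (h : IsFactorization G₀ U l) (hU : IsAtomSeq G₀ U) : card l = 1 := by
  obtain ⟨A, hA⟩ : ∃ A, A ∈ l := by
    refine exists_mem_of_ne_zero ?_
    rintro rfl
    exact hU.2.1 (by simpa using h.sum_eq.symm)
  have hAatom := h.isAtomSeq A hA
  have hAU : A = U := hU.eq_of_le (h.sum_eq ▸ le_sum_of_mem hA) hAatom.1.2 hAatom.2.1
  obtain ⟨l', rfl⟩ := exists_cons_of_mem hA
  have hl' : IsFactorization G₀ 0 l' :=
    ⟨fun C hC => h.isAtomSeq C (mem_cons_of_mem hC), by simpa [hAU] using h.sum_eq⟩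
  simp [hl'.eq_zero]

lemma two_le_card (h₁ : IsFactorization G₀ B l₁) (h₂ : IsFactorization G₀ B l₂)
    (hlt : card l₁ < card l₂) : 2 ≤ card l₁ := by
  by_contra! hcard
  obtain h0 | h1 : card l₁ = 0 ∨ card l₁ = 1 := by omega
  · obtain rfl := card_eq_zero.1 h0
    obtain rfl : B = 0 := by simpa using h₁.sum_eq.symm
    simp [h₂.eq_zero] at hlt
  · obtain ⟨A, rfl⟩ := Multiset.card_eq_one.1 h1
    obtain rfl : A = B := by simpa using h₁.sum_eq
    have := h₂.card_eq_one (h₁.isAtomSeq A (mem_singleton_self A))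
    omega

lemma exists_mem_deltaSet_le (h₁ : IsFactorization G₀ B l₁) (h₂ : IsFactorization G₀ B l₂)
    (hlt : card l₁ < card l₂) : ∃ d ∈ DeltaSet G₀, d ≤ card l₂ - card l₁ := by
  classical
  have hB : B ≠ 0 := by
    rintro rfl
    simp [h₂.eq_zero] at hlt
  have hex : ∃ k, k ∈ LengthSet G₀ B ∧ card l₁ < k := ⟨_, ⟨l₂, rfl, h₂.1, h₂.2⟩, hlt⟩
  have hle : Nat.find hex ≤ card l₂ := Nat.find_min' hex ⟨⟨l₂, rfl, h₂.1, h₂.2⟩, hlt⟩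
  refine ⟨Nat.find hex - card l₁, ⟨B, h₁.isZeroSumSeq, hB, card l₁, ⟨l₁, rfl, h₁.1, h₁.2⟩,
    Nat.find hex, (Nat.find_spec hex).1, (Nat.find_spec hex).2, rfl, ?_⟩, by omega⟩
  rintro k hk ⟨hlk, hkfind⟩
  exact Nat.find_min hex hkfind ⟨hk, hlk⟩

lemma sInf_deltaSet_le (h₁ : IsFactorization G₀ B l₁) (h₂ : IsFactorization G₀ B l₂)
    (hlt : card l₁ < card l₂) : sInf (DeltaSet G₀) ≤ card l₂ - 2 := by
  obtain ⟨d, hd, hle⟩ := h₁.exists_mem_deltaSet_le h₂ hlt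
  have := h₁.two_le_card h₂ hlt
  exact (Nat.sInf_le hd).trans (by omega)

end IsFactorization

lemma IsZeroSumSeq.exists_isFactorization (hB : IsZeroSumSeq G₀ B) :
    ∃ l, IsFactorization G₀ B l := by
  induction B using Multiset.strongInductionOn with
  | ih B ih =>
    by_cases hB₀ : B = 0
    · exact ⟨0, hB₀ ▸ .zero⟩
    by_cases hatom : IsAtomSeq G₀ B
    · exact ⟨{B}, .singleton hatom⟩
    obtain ⟨A, C, hA, hC, hA₀, hC₀, rfl⟩ : ∃ A C, IsZeroSumSeq G₀ A ∧ IsZeroSumSeq G₀ C ∧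
        A ≠ 0 ∧ C ≠ 0 ∧ B = A + C := by
      by_contra! h
      exact hatom ⟨hB, hB₀, h⟩
    obtain ⟨l₁, h₁⟩ := ih A (lt_add_of_pos_right A (pos_iff_ne_zero.2 hC₀)) hA
    obtain ⟨l₂, h₂⟩ := ih C (lt_add_of_pos_left C (pos_iff_ne_zero.2 hA₀)) hC
    exact ⟨l₁ + l₂, h₁.add h₂⟩

lemma IsZeroSumSeq.exists_isAtomSeq_le (hB : IsZeroSumSeq G₀ B) (hB₀ : B ≠ 0) :
    ∃ A ≤ B, IsAtomSeq G₀ A := by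
  obtain ⟨l, hl⟩ := hB.exists_isFactorization
  obtain ⟨A, hA⟩ : ∃ A, A ∈ l := by
    refine exists_mem_of_ne_zero ?_
    rintro rfl
    exact hB₀ (by simpa using hl.sum_eq.symm)
  exact ⟨A, hl.sum_eq ▸ le_sum_of_mem hA, hl.isAtomSeq A hA⟩

lemma isAtomSeq_replicate_addOrderOf (hg : IsOfFinAddOrder g) (hgG₀ : g ∈ G₀) :
    IsAtomSeq G₀ (replicate (addOrderOf g) g) := by
  have hzero : IsZeroSumSeq G₀ (replicate (addOrderOf g) g) :=
    ⟨fun x hx => eq_of_mem_replicate hx ▸ hgG₀, by simp⟩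
  obtain ⟨A, hA, hatom⟩ := hzero.exists_isAtomSeq_le
    (card_pos.1 (by simpa using hg.addOrderOf_pos))
  rwa [← hatom.eq_replicate_of_forall_mem fun x hx => eq_of_mem_replicate (mem_of_le hA hx)]

lemma pos_of_mem_deltaSet {d : ℕ} (hd : d ∈ DeltaSet G₀) : 0 < d := by
  obtain ⟨_, _, _, x, _, y, _, hxy, rfl, _⟩ := hd
  exact Nat.sub_pos_of_lt hxy

end Factorization

section Weight

variable {G M : Type*} [AddCommGroup G] {G₀ : Set G} {B : Multiset G}
  {l l₁ l₂ : Multiset (Multiset G)}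

lemma IsFactorization.sum_map_eq [AddCommMonoid M] {w : G → M} (h : IsFactorization G₀ B l) :
    (B.map w).sum = (l.map fun A => (A.map w).sum).sum := by
  rw [← h.sum_eq, ← join, map_join, sum_join, Multiset.map_map]
  rfl

lemma IsFactorization.sum_map_eq_card_nsmul [AddCommMonoid M] {w : G → M} {c : M}
    (h : IsFactorization G₀ B l) (hw : ∀ A ∈ l, (A.map w).sum = c) :
    (B.map w).sum = card l • c := by
  rw [h.sum_map_eq, map_congr rfl hw, map_const', sum_replicate]

-- The weight sum of a zero-sum sequence determines its factorization lengths modulo the order of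
-- the common weight `c` of the atoms.
lemma addOrderOf_dvd_of_mem_deltaSet [AddCommGroup M] {w : G → M} {c : M}
    (hw : ∀ A, IsAtomSeq G₀ A → (A.map w).sum = c) {d : ℕ} (hd : d ∈ DeltaSet G₀) :
    addOrderOf c ∣ d := by
  obtain ⟨B, _, _, _, ⟨l₁, rfl, h₁, hs₁⟩, _, ⟨l₂, rfl, h₂, hs₂⟩, hlt, rfl, _⟩ := hd
  have e₁ := IsFactorization.sum_map_eq_card_nsmul ⟨h₁, hs₁⟩ fun A hA => hw A (h₁ A hA)
  have e₂ := IsFactorization.sum_map_eq_card_nsmul ⟨h₂, hs₂⟩ fun A hA => hw A (h₂ A hA)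
  refine addOrderOf_dvd_of_nsmul_eq_zero ?_
  rw [sub_nsmul c hlt.le, ← e₁, ← e₂, add_neg_cancel]

lemma addOrderOf_mem_deltaStar [AddCommGroup M] {w : G → M} {c : M}
    (hw : ∀ A, IsAtomSeq G₀ A → (A.map w).sum = c) (hc : IsOfFinAddOrder c)
    (h₁ : IsFactorization G₀ B l₁) (h₂ : IsFactorization G₀ B l₂)
    (hcard : card l₂ = card l₁ + addOrderOf c) : addOrderOf c ∈ DeltaStar G := by
  have hpos := hc.addOrderOf_pos
  obtain ⟨d, hd, hle⟩ := h₁.exists_mem_deltaSet_le h₂ (by omega)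
  have hmem : sInf (DeltaSet G₀) ∈ DeltaSet G₀ := Nat.sInf_mem ⟨d, hd⟩
  refine ⟨G₀, ⟨d, hd⟩, le_antisymm ?_ ((Nat.sInf_le hd).trans (by omega))⟩
  exact Nat.le_of_dvd (pos_of_mem_deltaSet hmem) (addOrderOf_dvd_of_mem_deltaSet hw hmem)

end Weight

section CrossNumber

variable {G : Type*} [AddCommGroup G] {G₀ : Set G} {A B : Multiset G}
  {l : Multiset (Multiset G)} {g : G}

lemma crossNumber_add (A B : Multiset G) :
    crossNumber (A + B) = crossNumber A + crossNumber B := by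
  simp [crossNumber]

lemma crossNumber_replicate_addOrderOf (hg : IsOfFinAddOrder g) :
    crossNumber (replicate (addOrderOf g) g) = 1 := by
  have := hg.addOrderOf_pos.ne'
  simp [crossNumber, this]

lemma IsFactorization.crossNumber_eq_card (h : IsFactorization G₀ B l)
    (hl : ∀ A ∈ l, crossNumber A = 1) : crossNumber B = card l := by
  rw [crossNumber, h.sum_map_eq_card_nsmul hl, nsmul_one]

lemma IsFactorization.card_le_crossNumber (h : IsFactorization G₀ B l) (hG₀ : IsLCNSet G₀) :
    (card l : ℚ) ≤ crossNumber B := by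
  rw [crossNumber, h.sum_map_eq]
  have hone : ∀ x ∈ l.map crossNumber, 1 ≤ x := by
    intro x hx
    obtain ⟨A, hA, rfl⟩ := Multiset.mem_map.1 hx
    exact hG₀ A (h.isAtomSeq A hA)
  have hle := card_nsmul_le_sum hone
  rwa [card_map, nsmul_one] at hle

lemma exists_isAtomSeq_crossNumber_ne_one (h : (DeltaSet G₀).Nonempty) :
    ∃ U, IsAtomSeq G₀ U ∧ crossNumber U ≠ 1 := by
  obtain ⟨d, hd⟩ := h
  by_contra! hone
  have hdvd : addOrderOf (1 : ℚ) ∣ d := addOrderOf_dvd_of_mem_deltaSet hone hd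
  rw [addOrderOf_dvd_iff_nsmul_eq_zero, nsmul_one, Nat.cast_eq_zero] at hdvd
  exact (pos_of_mem_deltaSet hd).ne' hdvd

lemma card_le_exponent_of_crossNumber_le_one (hG : AddMonoid.ExponentExists G)
    (h : crossNumber A ≤ 1) : card A ≤ AddMonoid.exponent G := by
  have hpos : 0 < AddMonoid.exponent G := AddMonoid.exponent_pos.2 hG
  have hterm : ∀ x ∈ A.map fun g => (addOrderOf g : ℚ)⁻¹, (AddMonoid.exponent G : ℚ)⁻¹ ≤ x := by
    intro x hx
    obtain ⟨g, _, rfl⟩ := Multiset.mem_map.1 hx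
    have hord : (0 : ℚ) < addOrderOf g := by exact_mod_cast hG.addOrderOf_pos g
    exact inv_anti₀ hord (by exact_mod_cast Nat.le_of_dvd hpos (AddMonoid.addOrder_dvd_exponent g))
  have hle : card A • (AddMonoid.exponent G : ℚ)⁻¹ ≤ 1 := by
    simpa using (card_nsmul_le_sum hterm).trans h
  rw [nsmul_eq_mul, ← div_eq_mul_inv, div_le_one (by exact_mod_cast hpos)] at hle
  exact_mod_cast hle

end CrossNumber

section Exchange

variable {G : Type*} [AddCommGroup G] {G₀ : Set G} {C U W : Multiset G}
  {l : Multiset (Multiset G)}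

lemma exists_le_card_le_of_le_sum {α : Type*} {W : Multiset α} {l : Multiset (Multiset α)}
    (h : W ≤ l.sum) : ∃ T ≤ l, card T ≤ card W ∧ W ≤ T.sum := by
  classical
  induction l using Multiset.induction_on generalizing W with
  | empty => exact ⟨0, le_rfl, by simp, h⟩
  | cons A l ih =>
    obtain ⟨T, hTl, hcard, hle⟩ := ih (W := W - A) (by
      simpa [Multiset.sub_le_iff_le_add, add_comm] using h)
    by_cases hdisj : W - A = W
    · exact ⟨T, hTl.trans (le_cons_self l A), hdisj ▸ hcard, hdisj ▸ hle⟩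
    · have hlt : card (W - A) < card W :=
        card_lt_card ((Multiset.sub_le_self W A).lt_of_ne hdisj)
      refine ⟨A ::ₘ T, cons_le_cons A hTl, by simpa using hcard.trans_lt hlt, ?_⟩
      simpa [Multiset.sub_le_iff_le_add, add_comm] using hle

-- Only at most `card W` atoms of `l` meet `W`; regrouping them as `W` times a remainder cannot
-- lose more than one atom, since otherwise two factorizations of a product of at most `card W`
-- atoms would have lengths too close to each other.
lemma IsFactorization.exists_of_isAtomSeq_add (hl : IsFactorization G₀ (W + C) l)
    (hW : IsAtomSeq G₀ W) (hcard : card W - 2 < sInf (DeltaSet G₀)) :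
    ∃ l', IsFactorization G₀ C l' ∧ card l ≤ card l' + 1 := by
  obtain ⟨T, hTl, hTcard, hWT⟩ :=
    exists_le_card_le_of_le_sum (hl.sum_eq ▸ Multiset.le_add_right W C)
  obtain ⟨R, rfl⟩ := Multiset.le_iff_exists_add.1 hTl
  obtain ⟨S, hS⟩ := Multiset.le_iff_exists_add.1 hWT
  have hT : IsFactorization G₀ (W + S) T :=
    ⟨fun A hA => hl.isAtomSeq A (mem_add.2 (.inl hA)), hS⟩
  obtain ⟨l', hl'⟩ := (hT.isZeroSumSeq.right_of_add hW.1.2).exists_isFactorization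
  have hTl' : card T ≤ card l' + 1 := by
    by_contra! hlt
    have := (cons hW hl').sInf_deltaSet_le hT (by simpa using hlt)
    omega
  have hC : C = S + R.sum := by
    have := hl.sum_eq
    rw [sum_add, hS, add_assoc] at this
    exact (add_left_cancel this).symm
  refine ⟨l' + R, hC ▸ hl'.add ⟨fun A hA => hl.isAtomSeq A (mem_add.2 (.inr hA)), rfl⟩, ?_⟩
  simp only [card_add]
  omega

lemma IsFactorization.card_le_of_isAtomSeq_add {Ws : Multiset (Multiset G)}
    (hl : IsFactorization G₀ (U + Ws.sum) l) (hU : IsAtomSeq G₀ U)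
    (hWs : ∀ W ∈ Ws, IsAtomSeq G₀ W ∧ card W - 2 < sInf (DeltaSet G₀)) :
    card l ≤ card Ws + 1 := by
  induction Ws using Multiset.induction_on generalizing l with
  | empty => simpa using (hl.card_eq_one (by simpa using hU)).le
  | cons W Ws ih =>
    rw [sum_cons, add_left_comm] at hl
    obtain ⟨hW, hcard⟩ := hWs W (mem_cons_self W Ws)
    obtain ⟨l', hl', hle⟩ := hl.exists_of_isAtomSeq_add hW hcard
    have := ih hl' fun W' hW' => hWs W' (mem_cons_of_mem hW')
    rw [card_cons]
    omega

end Exchange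

section CrossNumberBounds

variable {G : Type*} [AddCommGroup G] {G₀ : Set G} {U : Multiset G}

lemma sInf_deltaSet_le_of_crossNumber_lt_one (hG : AddMonoid.ExponentExists G)
    (hU : IsAtomSeq G₀ U) (hk : crossNumber U < 1) :
    sInf (DeltaSet G₀) ≤ AddMonoid.exponent G - 2 := by
  set n := AddMonoid.exponent G
  set l := U.bind fun g => replicate (n / addOrderOf g) (replicate (addOrderOf g) g) with hl
  have hpos : (0 : ℚ) < n := by exact_mod_cast AddMonoid.exponent_pos.2 hG
  have hdvd : ∀ g : G, addOrderOf g ∣ n := AddMonoid.addOrder_dvd_exponent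
  have hfact : IsFactorization G₀ (n • U) l := by
    constructor
    · intro A hA
      obtain ⟨g, hg, hAg⟩ := mem_bind.1 hA
      rw [eq_of_mem_replicate hAg]
      exact isAtomSeq_replicate_addOrderOf hG.isOfFinAddOrder (hU.1.1 g hg)
    · rw [hl, sum_bind]
      simp only [sum_replicate, nsmul_replicate, Nat.div_mul_cancel (hdvd _)]
      simp only [← nsmul_singleton, sum_map_nsmul, sum_map_singleton]
  have hcard : (card l : ℚ) = n * crossNumber U := by
    rw [hl, card_bind, crossNumber, ← sum_map_mul_left, Nat.cast_multiset_sum, Multiset.map_map]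
    refine congrArg sum (map_congr rfl fun g _ => ?_)
    have hord : (addOrderOf g : ℚ) ≠ 0 := by exact_mod_cast (hG.addOrderOf_pos g).ne'
    simp only [Function.comp_apply, card_replicate, Nat.cast_div (hdvd g) hord, div_eq_mul_inv]
  have hlt : card l < n := by
    have : (card l : ℚ) < n := hcard ▸ mul_lt_of_lt_one_right hpos hk
    exact_mod_cast this
  simpa using hfact.sInf_deltaSet_le (.replicate hU n) (by simpa using hlt)

lemma sInf_deltaSet_le_of_one_lt_crossNumber [DecidableEq G] (hG : IsAddTorsion G)
    (hLCN : IsLCNSet G₀) (hU : IsAtomSeq G₀ U) (hk : 1 < crossNumber U) :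
    sInf (DeltaSet G₀) ≤ U.toFinset.card - 2 := by
  set l := U.toFinset.val.map fun g => replicate (addOrderOf g) g
  have hl : IsFactorization G₀ l.sum l := by
    refine ⟨fun A hA => ?_, rfl⟩
    obtain ⟨g, hg, rfl⟩ := Multiset.mem_map.1 hA
    exact isAtomSeq_replicate_addOrderOf (hG g) (hU.1.1 g (mem_toFinset.1 hg))
  have hUl : U ≤ l.sum := by
    calc U = ∑ g ∈ U.toFinset, replicate (U.count g) g := by
          simpa only [nsmul_singleton] using (toFinset_sum_count_nsmul_eq U).symm
      _ ≤ ∑ g ∈ U.toFinset, replicate (addOrderOf g) g :=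
          Finset.sum_le_sum fun g _ =>
            (replicate_le_replicate g).2 (hU.count_le_addOrderOf (hG g))
  obtain ⟨S, hS⟩ := Multiset.le_iff_exists_add.1 hUl
  rw [hS] at hl
  obtain ⟨l', hl'⟩ := (hl.isZeroSumSeq.right_of_add hU.1.2).exists_isFactorization
  have hkl : crossNumber (U + S) = card l := hl.crossNumber_eq_card fun A hA => by
    obtain ⟨g, _, rfl⟩ := Multiset.mem_map.1 hA
    exact crossNumber_replicate_addOrderOf (hG g)
  have hlt : card (U ::ₘ l') < card l := by
    have := hl'.card_le_crossNumber hLCN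
    rw [crossNumber_add] at hkl
    have : (card (U ::ₘ l') : ℚ) < card l := by
      rw [card_cons]
      push_cast
      linarith
    exact_mod_cast this
  simpa only [l, card_map, Finset.card_val] using (hl'.cons hU).sInf_deltaSet_le hl hlt

end CrossNumberBounds

section Rank

variable {G : Type*} [AddCommGroup G] {p : ℕ}

lemma finrank_eq_pRank_of_natCard_eq [Fact p.Prime] {V : Type*} [AddCommGroup V]
    [Module (ZMod p) V] [Finite V] (h : Nat.card V = Nat.card {x : G // p • x = 0}) :
    Module.finrank (ZMod p) V = pRank G p := by
  rw [pRank, ← h, Module.natCard_eq_pow_finrank (K := ZMod p), Nat.card_zmod,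
    Nat.log_pow (Fact.out : p.Prime).one_lt]

variable [Finite G]

lemma exists_linearIndependent_fin_pRank [Fact p.Prime]
    [Module (ZMod p) (nsmulAddMonoidHom p : G →+ G).ker] :
    ∃ e : Fin (pRank G p) → (nsmulAddMonoidHom p : G →+ G).ker, LinearIndependent (ZMod p) e := by
  rw [← finrank_eq_pRank_of_natCard_eq (V := (nsmulAddMonoidHom p : G →+ G).ker) rfl]
  exact ⟨_, (Module.finBasis (ZMod p) _).linearIndependent⟩

lemma pRank_le_log_natCard : pRank G p ≤ Nat.log p (Nat.card G) :=
  Nat.log_mono_right (Nat.card_le_card_of_injective _ Subtype.val_injective)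

lemma pRank_subgroup_le (H : AddSubgroup G) : pRank H p ≤ pRank G p :=
  Nat.log_mono_right (Nat.card_le_card_of_injective
    (Subtype.map Subtype.val fun x hx => by simpa using congrArg Subtype.val hx)
    (Subtype.map_injective _ Subtype.val_injective))

lemma bddAbove_pRank : BddAbove {r : ℕ | ∃ p : ℕ, p.Prime ∧ r = pRank G p} := by
  refine ⟨Nat.card G, ?_⟩
  rintro _ ⟨p, _, rfl⟩
  exact pRank_le_log_natCard.trans (Nat.log_le_self p _)

lemma pRank_le_rankG (hp : p.Prime) : pRank G p ≤ rankG G :=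
  le_csSup bddAbove_pRank ⟨p, hp, rfl⟩

lemma exists_prime_rankG_eq (G : Type*) [AddCommGroup G] [Finite G] :
    ∃ p, p.Prime ∧ rankG G = pRank G p :=
  Nat.sSup_mem (s := {r | ∃ p : ℕ, p.Prime ∧ r = pRank G p}) ⟨_, 2, Nat.prime_two, rfl⟩
    bddAbove_pRank

lemma three_le_exponent_or_two_le_rankG (hG : 2 < Nat.card G) :
    3 ≤ AddMonoid.exponent G ∨ 2 ≤ rankG G := by
  by_contra! ⟨hexp, hrank⟩
  have htwo : ∀ x : G, 2 • x = 0 := by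
    have hpos := AddMonoid.ExponentExists.of_finite (G := G) |>.exponent_pos
    obtain h1 | h2 : AddMonoid.exponent G = 1 ∨ AddMonoid.exponent G = 2 := by omega
    · have : Subsingleton G := AddMonoid.exp_eq_one_iff.1 h1
      exact fun x => Subsingleton.elim _ _
    · exact h2 ▸ AddMonoid.exponent_nsmul_eq_zero
  let := AddCommGroup.zmodModule htwo
  have hcard : Nat.card G = 2 ^ pRank G 2 := by
    rw [← finrank_eq_pRank_of_natCard_eq (V := G)
      (Nat.card_congr (Equiv.subtypeUnivEquiv htwo).symm),
      Module.natCard_eq_pow_finrank (K := ZMod 2), Nat.card_zmod]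
  have : 2 ^ pRank G 2 ≤ 2 ^ 1 :=
    Nat.pow_le_pow_right two_pos (by have := pRank_le_rankG (G := G) Nat.prime_two; omega)
  omega

end Rank

section Generation

variable {G : Type*} [AddCommGroup G] [Finite G] {p : ℕ}

-- If multiplication by `p` is onto on the finite quotient by `K`, that quotient has no element of
-- order `p`.
lemma not_dvd_index_of_sup_range_eq_top (hp : p.Prime) {K : AddSubgroup G}
    (h : K ⊔ (nsmulAddMonoidHom p : G →+ G).range = ⊤) : ¬ p ∣ K.index := by
  have hsurj : Function.Surjective (nsmulAddMonoidHom p : G ⧸ K →+ G ⧸ K) := by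
    intro y
    obtain ⟨x, rfl⟩ := QuotientAddGroup.mk_surjective y
    obtain ⟨k, hk, _, ⟨g, rfl⟩, rfl⟩ := AddSubgroup.mem_sup.1 (h ▸ AddSubgroup.mem_top x)
    refine ⟨(g : G ⧸ K), ?_⟩
    simp [(QuotientAddGroup.eq_zero_iff k).2 hk]
  intro hdvd
  have : Fact p.Prime := ⟨hp⟩
  obtain ⟨x, hx⟩ := exists_prime_addOrderOf_dvd_card' (G := G ⧸ K) p hdvd
  have hx₀ : x = 0 := (Finite.injective_iff_surjective.2 hsurj) (by
    simpa [hx] using addOrderOf_nsmul_eq_zero x)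
  simp [hx₀, hp.one_lt.ne] at hx

lemma exists_finset_subset_map_closure_eq_top {G V : Type*} [AddCommGroup G] [AddCommGroup V]
    [Fact p.Prime] [Module (ZMod p) V] [Module.Finite (ZMod p) V] {π : G →+ V}
    (hπ : Function.Surjective π) {X : Set G} (hX : AddSubgroup.closure X = ⊤) :
    ∃ E : Finset G, ↑E ⊆ X ∧ E.card ≤ Module.finrank (ZMod p) V ∧
      (AddSubgroup.closure (E : Set G)).map π = ⊤ := by
  classical
  obtain ⟨f, hfX, hfspan, -⟩ := Submodule.exists_fun_fin_finrank_span_eq (ZMod p) (π '' X)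
  choose g hgX hgf using hfX
  have hXspan : Submodule.span (ZMod p) (π '' X) = ⊤ := by
    have hle : AddSubgroup.closure X ≤
        (Submodule.span (ZMod p) (π '' X)).toAddSubgroup.comap π :=
      (AddSubgroup.closure_le _).2 fun x hx => Submodule.subset_span ⟨x, hx, rfl⟩
    refine Submodule.eq_top_iff'.2 fun y => ?_
    obtain ⟨x, rfl⟩ := hπ y
    exact hle (hX ▸ AddSubgroup.mem_top x)
  refine ⟨Finset.univ.image g, by simpa [Set.range_subset_iff] using hgX, ?_, ?_⟩
  · refine Finset.card_image_le.trans ?_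
    rw [Finset.card_univ, Fintype.card_fin, hXspan, finrank_top]
  · have hspan : ⊤ ≤ AddSubgroup.toZModSubmodule p
        ((AddSubgroup.closure (Finset.univ.image g : Set G)).map π) := by
      refine hXspan.ge.trans (hfspan.ge.trans (Submodule.span_le.2 ?_))
      rintro _ ⟨i, rfl⟩
      exact ⟨g i, AddSubgroup.subset_closure (by simp), hgf i⟩
    exact eq_top_iff.2 fun y _ => hspan Submodule.mem_top

-- By Burnside's basis argument it suffices to generate `G / pG`, a vector space of dimension
-- `pRank G p`.
lemma exists_finset_subset_not_dvd_index_closure (hp : p.Prime) {X : Set G}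
    (hX : AddSubgroup.closure X = ⊤) :
    ∃ E : Finset G, ↑E ⊆ X ∧ E.card ≤ pRank G p ∧
      ¬ p ∣ (AddSubgroup.closure (E : Set G)).index := by
  have : Fact p.Prime := ⟨hp⟩
  set P := (nsmulAddMonoidHom p : G →+ G).range
  have : Module (ZMod p) (G ⧸ P) := QuotientAddGroup.zmodModule fun x => ⟨x, rfl⟩
  obtain ⟨E, hEX, hEcard, hEmap⟩ := exists_finset_subset_map_closure_eq_top (p := p)
    (QuotientAddGroup.mk'_surjective P) hX
  have hrank : Module.finrank (ZMod p) (G ⧸ P) = pRank G p :=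
    finrank_eq_pRank_of_natCard_eq AddSubgroup.index_range
  refine ⟨E, hEX, hrank ▸ hEcard, not_dvd_index_of_sup_range_eq_top hp ?_⟩
  change AddSubgroup.closure (E : Set G) ⊔ P = ⊤
  rw [← QuotientAddGroup.ker_mk' P, ← AddSubgroup.comap_map_eq, hEmap, AddSubgroup.comap_top]

lemma exists_finset_subset_nsmul_mem_closure (hp : p.Prime) {X : Set G} {x : G}
    (hx : x ∈ AddSubgroup.closure X) :
    ∃ E : Finset G, ↑E ⊆ X ∧ E.card ≤ pRank G p ∧
      ∃ m, ¬ p ∣ m ∧ m • x ∈ AddSubgroup.closure (E : Set G) := by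
  classical
  set H := AddSubgroup.closure X
  obtain ⟨E, hEX, hEcard, hE⟩ := exists_finset_subset_not_dvd_index_closure hp
    (AddSubgroup.closure_closure_coe_preimage (k := X))
  refine ⟨E.image (↑), ?_, Finset.card_image_le.trans (hEcard.trans (pRank_subgroup_le H)),
    _, hE, ?_⟩
  · simpa [Set.image_subset_iff] using hEX
  · have := AddSubgroup.nsmul_index_mem (AddSubgroup.closure (E : Set H)) ⟨x, hx⟩
    simpa [AddMonoidHom.map_closure] using AddSubgroup.mem_map_of_mem H.subtype this

lemma exists_multiset_sum_eq_of_mem_closure {E : Set G} {x : G}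
    (hx : x ∈ AddSubgroup.closure E) : ∃ T : Multiset G, (∀ y ∈ T, y ∈ E) ∧ T.sum = x := by
  rw [← AddSubgroup.mem_toAddSubmonoid, AddSubgroup.closure_toAddSubmonoid_of_finite] at hx
  exact AddSubmonoid.exists_multiset_of_mem_closure hx

lemma exists_forall_ge_mem_of_forall_prime (J : AddSubmonoid ℕ)
    (hJ : ∀ p : ℕ, p.Prime → ∃ m ∈ J, ¬ p ∣ m) : ∃ N, ∀ m, N ≤ m → m ∈ J := by
  obtain ⟨N, hN⟩ := Nat.exists_mem_closure_of_ge (J : Set ℕ)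
  have hgcd : Nat.setGcd (J : Set ℕ) = 1 := by
    by_contra h
    obtain ⟨p, hp, hdvd⟩ := Nat.exists_prime_and_dvd h
    obtain ⟨m, hm, hpm⟩ := hJ p hp
    exact hpm (hdvd.trans (Nat.setGcd_dvd_of_mem hm))
  refine ⟨N, fun m hm => ?_⟩
  simpa using hN m hm (hgcd ▸ one_dvd m)

end Generation

section UnitCrossNumber

variable {G : Type*} [AddCommGroup G] {G₀ : Set G} {B U : Multiset G} {X : Finset G} {h : G}

/-- The monoid of all sequences that are products of atoms over `G₀` of cross number `1`. -/
def unitCrossMonoid (G₀ : Set G) : AddSubmonoid (Multiset G) :=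
  AddSubmonoid.closure {A | IsAtomSeq G₀ A ∧ crossNumber A = 1}

lemma mem_unitCrossMonoid_iff : B ∈ unitCrossMonoid G₀ ↔
    ∃ l, IsFactorization G₀ B l ∧ ∀ A ∈ l, crossNumber A = 1 := by
  constructor
  · intro hB
    obtain ⟨l, hl, rfl⟩ := AddSubmonoid.exists_multiset_of_mem_closure hB
    exact ⟨l, ⟨fun A hA => (hl A hA).1, rfl⟩, fun A hA => (hl A hA).2⟩
  · rintro ⟨l, hl, hk⟩
    exact hl.sum_eq ▸ multiset_sum_mem l fun A hA =>
      AddSubmonoid.subset_closure ⟨hl.isAtomSeq A hA, hk A hA⟩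

variable [DecidableEq G]

lemma IsZeroSumSeq.mem_unitCrossMonoid_of_card_lt {n : ℕ}
    (hmin : ∀ V, IsAtomSeq G₀ V → V.toFinset.card < n → crossNumber V = 1)
    (hB : IsZeroSumSeq G₀ B) (hcard : B.toFinset.card < n) : B ∈ unitCrossMonoid G₀ := by
  obtain ⟨l, hl⟩ := hB.exists_isFactorization
  refine mem_unitCrossMonoid_iff.2 ⟨l, hl, fun A hA => hmin A (hl.isAtomSeq A hA) ?_⟩
  have hAB : A ≤ B := hl.sum_eq ▸ le_sum_of_mem hA
  exact (Finset.card_le_card (toFinset_subset.2 (subset_of_le hAB))).trans_lt hcard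

lemma IsZeroSumSeq.mem_unitCrossMonoid_of_addOrderOf_dvd_count
    (hmin : ∀ V, IsAtomSeq (X : Set G) V → V.toFinset.card < X.card → crossNumber V = 1)
    (hB : IsZeroSumSeq (X : Set G) B) (hh : IsOfFinAddOrder h) (hX : h ∈ X)
    (hdvd : addOrderOf h ∣ B.count h) : B ∈ unitCrossMonoid (X : Set G) := by
  obtain ⟨c, hc⟩ := hdvd
  have hsplit : c • replicate (addOrderOf h) h + B.filter (fun x => ¬ h = x) = B := by
    rw [nsmul_replicate, mul_comm, ← hc, ← filter_eq, filter_add_not]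
  rw [← hsplit] at hB ⊢
  refine add_mem (mem_unitCrossMonoid_iff.2
    ⟨_, .replicate (isAtomSeq_replicate_addOrderOf hh hX) c, fun A hA => ?_⟩) ?_
  · rw [eq_of_mem_replicate hA, crossNumber_replicate_addOrderOf hh]
  have hrest := hB.right_of_add (by simp [sum_nsmul])
  refine hrest.mem_unitCrossMonoid_of_card_lt hmin (Finset.card_lt_card ?_)
  refine (Finset.ssubset_iff_of_subset fun x hx => hrest.1 x (mem_toFinset.1 hx)).2
    ⟨h, hX, by simp⟩

variable [Finite G]

-- Modulo `p`, at most `rankG G` other elements of the support of `U` suffice to express `h`.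
lemma IsAtomSeq.exists_mem_unitCrossMonoid_count_eq (hU : IsAtomSeq G₀ U)
    (hmin : ∀ V, IsAtomSeq (U.toFinset : Set G) V → V.toFinset.card < U.toFinset.card →
      crossNumber V = 1)
    (hrank : rankG G + 2 ≤ U.toFinset.card) (hh : h ∈ U) {p : ℕ} (hp : p.Prime) :
    ∃ m, ¬ p ∣ m ∧ ∃ W ∈ unitCrossMonoid (U.toFinset : Set G), W.count h = m * U.count h := by
  have hsum : U.count h • h + (U.filter fun x => ¬ h = x).sum = 0 := by
    rw [← sum_replicate, ← filter_eq, ← sum_add, filter_add_not, hU.1.2]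
  have hcl : U.count h • h ∈ AddSubgroup.closure (U.toFinset.erase h : Set G) := by
    rw [eq_neg_of_add_eq_zero_left hsum]
    refine neg_mem (multiset_sum_mem _ fun x hx => AddSubgroup.subset_closure ?_)
    simpa [and_comm, eq_comm] using hx
  obtain ⟨E, hEX, hEcard, m, hpm, hm⟩ := exists_finset_subset_nsmul_mem_closure hp hcl
  obtain ⟨T, hTE, hT⟩ := exists_multiset_sum_eq_of_mem_closure (neg_mem hm)
  set W := replicate (m * U.count h) h + T with hW
  have hWE : W.toFinset ⊆ insert h E := by
    intro x hx
    rcases mem_add.1 (mem_toFinset.1 hx) with hx | hx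
    · exact Finset.mem_insert.2 (.inl (eq_of_mem_replicate hx))
    · exact Finset.mem_insert_of_mem (hTE x hx)
  have hEU : insert h E ⊆ U.toFinset := Finset.insert_subset (mem_toFinset.2 hh)
    fun x hx => Finset.mem_of_mem_erase (hEX hx)
  have hzero : IsZeroSumSeq (U.toFinset : Set G) W :=
    ⟨fun x hx => hEU (hWE (mem_toFinset.2 hx)), by
      rw [hW, sum_add, sum_replicate, hT, mul_nsmul', add_neg_cancel]⟩
  have hcard : W.toFinset.card < U.toFinset.card := by
    have h₁ := Finset.card_le_card hWE
    have h₂ := Finset.card_insert_le h E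
    have h₃ := pRank_le_rankG (G := G) hp
    omega
  have hhT : h ∉ T := fun hT => by simpa using hEX (hTE h hT)
  exact ⟨m, hpm, W, hzero.mem_unitCrossMonoid_of_card_lt hmin hcard, by simp [hW, hhT]⟩

lemma IsAtomSeq.exists_forall_ge_exists_mem_unitCrossMonoid (hU : IsAtomSeq G₀ U)
    (hmin : ∀ V, IsAtomSeq (U.toFinset : Set G) V → V.toFinset.card < U.toFinset.card →
      crossNumber V = 1)
    (hrank : rankG G + 2 ≤ U.toFinset.card) (hh : h ∈ U) :
    ∃ N, ∀ m, N ≤ m → ∃ W ∈ unitCrossMonoid (U.toFinset : Set G),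
      W.count h = m * U.count h := by
  refine exists_forall_ge_mem_of_forall_prime (((unitCrossMonoid _).map
    (countAddMonoidHom h)).comap (AddMonoidHom.mulRight (U.count h))) fun p hp => ?_
  obtain ⟨m, hpm, hW⟩ := hU.exists_mem_unitCrossMonoid_count_eq hmin hrank hh hp
  exact ⟨m, hW, hpm⟩

-- For large `m` there is a product `W` of atoms of cross number `1` in which `h` occurs
-- `m * U.count h` times. Choosing `m ≡ -1` modulo `ord(h)` makes `U + W` a product of atoms of
-- cross number `1` too, and the cross number of `U` contradicts the exchange lemma.
lemma sInf_deltaSet_le_of_rankG_add_two_le (hU : IsAtomSeq G₀ U) (hk : 1 < crossNumber U)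
    (hmin : ∀ V, IsAtomSeq G₀ V → V.toFinset.card < U.toFinset.card → crossNumber V = 1)
    (hrank : rankG G + 2 ≤ U.toFinset.card) :
    sInf (DeltaSet G₀) ≤ AddMonoid.exponent G - 2 := by
  by_contra! hlt
  have hXG₀ : ∀ x ∈ U.toFinset, x ∈ G₀ := fun x hx => hU.1.1 x (mem_toFinset.1 hx)
  have hminU : ∀ V, IsAtomSeq (U.toFinset : Set G) V → V.toFinset.card < U.toFinset.card →
      crossNumber V = 1 := fun V hV => hmin V (hV.mono fun x hx => hXG₀ x (hV.1.1 x hx))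
  obtain ⟨h, hh⟩ := exists_mem_of_ne_zero hU.2.1
  have hord := addOrderOf_pos h
  obtain ⟨N, hN⟩ := hU.exists_forall_ge_exists_mem_unitCrossMonoid hminU hrank hh
  have hNm : N + 1 ≤ addOrderOf h * (N + 1) := Nat.le_mul_of_pos_left _ hord
  obtain ⟨W, hW, hcount⟩ := hN (addOrderOf h * (N + 1) - 1) (by omega)
  obtain ⟨Ws, hWs, hWsk⟩ := mem_unitCrossMonoid_iff.1 hW
  have hUW : U + W ∈ unitCrossMonoid (U.toFinset : Set G) := by
    refine IsZeroSumSeq.mem_unitCrossMonoid_of_addOrderOf_dvd_count hminU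
      (.add ⟨fun x hx => mem_toFinset.2 hx, hU.1.2⟩ hWs.isZeroSumSeq)
      (isOfFinAddOrder_of_finite h) (mem_toFinset.2 hh) ?_
    rw [count_add, hcount, Nat.sub_mul, one_mul, ← Nat.add_sub_assoc (Nat.le_mul_of_pos_left _
      (by omega)), Nat.add_sub_cancel_left, mul_assoc]
    exact dvd_mul_right _ _
  obtain ⟨l, hl, hlk⟩ := mem_unitCrossMonoid_iff.1 hUW
  have hle : card l ≤ card Ws + 1 := by
    refine (hWs.sum_eq ▸ hl.mono hXG₀).card_le_of_isAtomSeq_add hU fun A hA => ⟨?_, ?_⟩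
    · exact (hWs.mono hXG₀).isAtomSeq A hA
    · have := card_le_exponent_of_crossNumber_le_one .of_finite (hWsk A hA).le
      omega
  have hkl := hl.crossNumber_eq_card hlk
  rw [crossNumber_add, hWs.crossNumber_eq_card hWsk] at hkl
  have : (card l : ℚ) ≤ card Ws + 1 := by exact_mod_cast hle
  linarith

end UnitCrossNumber

section UpperBound

variable {G : Type*} [AddCommGroup G] [Finite G] {G₀ : Set G}

theorem sInf_deltaSet_le (h : (DeltaSet G₀).Nonempty) :
    sInf (DeltaSet G₀) ≤ max (AddMonoid.exponent G - 2) (rankG G - 1) := by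
  classical
  by_cases hLCN : IsLCNSet G₀
  · obtain ⟨U₀, hU₀, hk₀⟩ := exists_isAtomSeq_crossNumber_ne_one h
    obtain ⟨U, ⟨hU, hk⟩, hmin⟩ := exists_minimalFor_of_wellFoundedLT
      (fun U => IsAtomSeq G₀ U ∧ crossNumber U ≠ 1) (fun U => U.toFinset.card) ⟨U₀, hU₀, hk₀⟩
    have hk' : 1 < crossNumber U := (hLCN U hU).lt_of_ne' hk
    by_cases hcard : rankG G + 2 ≤ U.toFinset.card
    · refine le_max_of_le_left (sInf_deltaSet_le_of_rankG_add_two_le hU hk' ?_ hcard)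
      intro V hV hVU
      by_contra hkV
      exact (hmin ⟨hV, hkV⟩ hVU.le).not_gt hVU
    · have := sInf_deltaSet_le_of_one_lt_crossNumber isAddTorsion_of_finite hLCN hU hk'
      exact le_max_of_le_right (by omega)
  · obtain ⟨U, hU, hk⟩ : ∃ U, IsAtomSeq G₀ U ∧ crossNumber U < 1 := by
      simpa [IsLCNSet] using hLCN
    exact le_max_of_le_left (sInf_deltaSet_le_of_crossNumber_lt_one .of_finite hU hk)

end UpperBound

section OrderBound

variable {G : Type*} [AddCommGroup G] {A : Multiset G} {g : G}

lemma addOrderOf_natCast_zmod_mul {n k : ℕ} (hn : n ≠ 0) (hk : k ≠ 0) :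
    addOrderOf (n : ZMod (n * k)) = k := by
  rw [ZMod.addOrderOf_coe n (mul_ne_zero hn hk), Nat.gcd_mul_right_left,
    Nat.mul_div_cancel_left k (Nat.pos_of_ne_zero hn)]

lemma ne_neg_of_three_le_addOrderOf (h : 3 ≤ addOrderOf g) : g ≠ -g := by
  intro hg
  have htwo : 2 • g = 0 := by rw [two_nsmul, ← eq_neg_iff_add_eq_zero, ← hg]
  have := addOrderOf_le_of_nsmul_eq_zero two_pos htwo
  omega

lemma IsAtomSeq.eq_replicate_or_eq_pair (hg : g ≠ -g) (hA : IsAtomSeq {g, -g} A) :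
    A = replicate (addOrderOf g) g ∨ A = replicate (addOrderOf g) (-g) ∨ A = {g, -g} := by
  by_cases hmem : g ∈ A
  · by_cases hneg : -g ∈ A
    · have hle : ({g, -g} : Multiset G) ≤ A :=
        (Multiset.le_iff_subset (by simpa using hg)).2 (by simp [hmem, hneg])
      exact .inr (.inr (hA.eq_of_le hle (by simp) (by simp)).symm)
    · exact .inl (hA.eq_replicate_of_forall_mem fun x hx =>
        (hA.1.1 x hx).resolve_right fun h => hneg (h ▸ hx))
  · rw [← addOrderOf_neg]
    exact .inr (.inl (hA.eq_replicate_of_forall_mem fun x hx =>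
      (hA.1.1 x hx).resolve_left fun h => hmem (h ▸ hx)))

lemma isAtomSeq_pair_neg (h : 3 ≤ addOrderOf g) : IsAtomSeq {g, -g} ({g, -g} : Multiset G) := by
  have hg := ne_neg_of_three_le_addOrderOf h
  have hzero : IsZeroSumSeq {g, -g} ({g, -g} : Multiset G) := ⟨by simp, by simp⟩
  obtain ⟨A, hle, hA⟩ := hzero.exists_isAtomSeq_le (by simp)
  have hcard : card A ≤ 2 := card_le_card hle
  obtain rfl | rfl | rfl := hA.eq_replicate_or_eq_pair hg
  · rw [card_replicate] at hcard
    omega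
  · rw [card_replicate] at hcard
    omega
  · exact hA

-- Weights `1` for `g` and `n - 1` for `-g` give all three atoms `g ^ n`, `(-g) ^ n` and `g (-g)`
-- the weight `n` modulo `n * (n - 2)`, where `n = ord(g)`.
lemma addOrderOf_sub_two_mem_deltaStar (h : 3 ≤ addOrderOf g) :
    addOrderOf g - 2 ∈ DeltaStar G := by
  classical
  obtain ⟨k, hk⟩ : ∃ k, addOrderOf g = k + 2 := ⟨_, (Nat.sub_add_cancel (by omega)).symm⟩
  have hg := ne_neg_of_three_le_addOrderOf h
  have hfin : IsOfFinAddOrder g := addOrderOf_pos_iff.1 (by omega)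
  let w : G → ZMod ((k + 2) * k) := fun x => if x = g then 1 else k + 1
  have hkk : ((k + 2 : ℕ) : ZMod ((k + 2) * k)) * k = 0 := by
    exact_mod_cast ZMod.natCast_self ((k + 2) * k)
  have hw : ∀ A, IsAtomSeq {g, -g} A → (A.map w).sum = (k + 2 : ℕ) := by
    intro A hA
    obtain rfl | rfl | rfl := hA.eq_replicate_or_eq_pair hg
    · simp only [map_replicate, sum_replicate, w, if_true, hk, nsmul_one]
    · simp only [map_replicate, sum_replicate, w, if_neg hg.symm, hk, nsmul_eq_mul]
      linear_combination hkk
    · simp only [insert_eq_cons, map_cons, map_singleton, sum_cons, sum_singleton, w, if_true,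
        if_neg hg.symm]
      push_cast
      ring
  have hord : addOrderOf ((k + 2 : ℕ) : ZMod ((k + 2) * k)) = k :=
    addOrderOf_natCast_zmod_mul (by omega) (by omega)
  have h₁ : IsFactorization {g, -g} (addOrderOf g • {g, -g} : Multiset G)
      {replicate (addOrderOf g) g, replicate (addOrderOf (-g)) (-g)} := by
    refine ⟨fun A hA => ?_, by
      rw [insert_eq_cons, sum_cons, sum_singleton, insert_eq_cons, ← singleton_add, nsmul_add,
        nsmul_singleton, nsmul_singleton, addOrderOf_neg]⟩
    obtain rfl | hA := mem_cons.1 hA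
    · exact isAtomSeq_replicate_addOrderOf hfin (by simp)
    · exact mem_singleton.1 hA ▸ isAtomSeq_replicate_addOrderOf hfin.neg (by simp)
  have h₂ := IsFactorization.replicate (isAtomSeq_pair_neg h) (addOrderOf g)
  have := addOrderOf_mem_deltaStar hw (addOrderOf_pos_iff.1 (by omega)) h₁ h₂
    (by rw [hord, card_replicate, hk, add_comm]; rfl)
  rwa [hord, ← Nat.add_sub_cancel (n := k) (m := 2), ← hk] at this

end OrderBound

section IndependentFamily

variable {G ι : Type*} [AddCommGroup G] [Fintype ι] {e : ι → G} {n : ℕ}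

/-- The family `e` consists of independent elements of order `n`: it is a basis of a free
`ℤ/n`-submodule of `G`. The coefficients are natural numbers because `G` itself need not be a
`ℤ/n`-module. -/
def IsIndependentOfOrder (n : ℕ) (e : ι → G) : Prop :=
  ∀ c d : ι → ℕ, ∑ i, c i • e i = ∑ i, d i • e i ↔ ∀ i, c i ≡ d i [MOD n]

/-- The set `{e₀} ∪ {e i}` with `e₀ = ∑ i, e i`. For independent elements `e i` of order `n` it
realizes the minimal distance `r - 1`, where `r` is the number of the `e i`. -/
abbrev withSum (e : ι → G) : Set G := insert (∑ i, e i) (Set.range e)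

/-- The sequence `e₀ ^ a * (∏ i, e i) ^ b`, where `e₀ = ∑ i, e i`. -/
def mixedSeq (e : ι → G) (a b : ℕ) : Multiset G :=
  a • {∑ i, e i} + b • Finset.univ.val.map e

lemma mixedSeq_add (a b c d : ℕ) :
    mixedSeq e a b + mixedSeq e c d = mixedSeq e (a + c) (b + d) := by
  simp only [mixedSeq, add_nsmul]
  exact add_add_add_comm _ _ _ _

lemma sum_map_mixedSeq {M : Type*} [AddCommMonoid M] (w : G → M) (a b : ℕ) :
    ((mixedSeq e a b).map w).sum = a • w (∑ i, e i) + b • ∑ i, w (e i) := by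
  simp only [mixedSeq, Multiset.map_add, Multiset.map_nsmul, map_singleton, sum_add, sum_nsmul,
    sum_singleton, Multiset.map_map]
  rfl

lemma mem_of_mem_mixedSeq {a b : ℕ} {x : G} (hx : x ∈ mixedSeq e a b) : x ∈ withSum e := by
  obtain hx | hx := mem_add.1 hx
  · exact .inl (mem_singleton.1 (mem_of_mem_nsmul hx))
  · obtain ⟨i, _, rfl⟩ := Multiset.mem_map.1 (mem_of_mem_nsmul hx)
    exact .inr ⟨i, rfl⟩

namespace IsIndependentOfOrder

lemma addOrderOf_sum [Nonempty ι] (he : IsIndependentOfOrder n e) :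
    addOrderOf (∑ i, e i) = n := by
  refine Nat.dvd_right_iff_eq.1 fun m => ?_
  rw [addOrderOf_dvd_iff_nsmul_eq_zero]
  simpa [Finset.smul_sum, Nat.modEq_zero_iff_dvd] using he (fun _ => m) (fun _ => 0)

lemma addOrderOf_apply (he : IsIndependentOfOrder n e) (i : ι) : addOrderOf (e i) = n := by
  classical
  refine Nat.dvd_right_iff_eq.1 fun m => ?_
  have hsingle := he (Pi.single i m) 0
  simp only [Pi.single_apply, ite_smul, zero_smul, Finset.sum_ite_eq', Finset.mem_univ, if_true,
    Pi.zero_apply, Finset.sum_const_zero, Nat.modEq_zero_iff_dvd] at hsingle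
  rw [addOrderOf_dvd_iff_nsmul_eq_zero, hsingle]
  exact ⟨fun h => by simpa using h i, fun h j => by split_ifs <;> simp [h]⟩

lemma addOrderOf_eq_of_mem [Nonempty ι] (he : IsIndependentOfOrder n e) {x : G}
    (hx : x ∈ withSum e) : addOrderOf x = n := by
  obtain rfl | ⟨i, rfl⟩ := hx
  exacts [he.addOrderOf_sum, he.addOrderOf_apply i]

lemma isAtomSeq_replicate [Nonempty ι] (he : IsIndependentOfOrder n e) (hn : 0 < n) {x : G}
    (hx : x ∈ withSum e) : IsAtomSeq (withSum e) (replicate n x) := by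
  obtain rfl := he.addOrderOf_eq_of_mem hx
  exact isAtomSeq_replicate_addOrderOf (addOrderOf_pos_iff.1 hn) hx

lemma isFactorization_replicate [Nonempty ι] (he : IsIndependentOfOrder n e) (hn : 0 < n) :
    IsFactorization (withSum e) (mixedSeq e n n)
      (replicate n (∑ i, e i) ::ₘ Finset.univ.val.map fun i => replicate n (e i)) := by
  refine ⟨fun A hA => ?_, ?_⟩
  · obtain rfl | hA := mem_cons.1 hA
    · exact he.isAtomSeq_replicate hn (.inl rfl)
    · obtain ⟨i, -, rfl⟩ := Multiset.mem_map.1 hA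
      exact he.isAtomSeq_replicate hn (.inr ⟨i, rfl⟩)
  · simp only [sum_cons, mixedSeq, ← nsmul_singleton, sum_map_nsmul]
    rw [← sum_map_singleton (Finset.univ.val.map e), Multiset.map_map]
    rfl

lemma injective (he : IsIndependentOfOrder n e) (hn : n ≠ 1) : Function.Injective e := by
  classical
  intro i j hij
  by_contra hne
  have hmod := (he (Pi.single i 1) (Pi.single j 1)).1 (by simpa [Pi.single_apply, ite_smul]) i
  rw [Pi.single_eq_same, Pi.single_eq_of_ne hne, Nat.modEq_zero_iff_dvd, Nat.dvd_one] at hmod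
  exact hn hmod

lemma ne_sum [Nontrivial ι] (he : IsIndependentOfOrder n e) (hn : n ≠ 1) (i : ι) :
    e i ≠ ∑ j, e j := by
  classical
  intro hi
  obtain ⟨j, hj⟩ := exists_ne i
  have hmod := (he (Pi.single i 1) 1).1 (by simpa [Pi.single_apply, ite_smul]) j
  rw [Pi.single_eq_of_ne hj, Pi.one_apply] at hmod
  exact hn (Nat.dvd_one.1 (Nat.modEq_zero_iff_dvd.1 hmod.symm))

variable [Nontrivial ι] {A : Multiset G} {a b : ℕ}

lemma count_mixedSeq_sum [DecidableEq G] (he : IsIndependentOfOrder n e) (hn : n ≠ 1) :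
    (mixedSeq e a b).count (∑ i, e i) = a := by
  have hmem : ∑ i, e i ∉ Finset.univ.val.map e := by simpa using he.ne_sum hn
  rw [mixedSeq, count_add, count_nsmul, count_nsmul, count_singleton_self,
    count_eq_zero_of_notMem hmem, mul_one, mul_zero, add_zero]

lemma count_mixedSeq [DecidableEq G] (he : IsIndependentOfOrder n e) (hn : n ≠ 1) (i : ι) :
    (mixedSeq e a b).count (e i) = b := by
  rw [mixedSeq, count_add, count_nsmul, count_nsmul, count_singleton, if_neg (he.ne_sum hn i),
    count_eq_one_of_mem (Finset.univ.nodup.map (he.injective hn))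
      (mem_map_of_mem e (Finset.mem_univ_val i)), mul_one, mul_zero, zero_add]

lemma dvd_count_add_count [DecidableEq G] (he : IsIndependentOfOrder n e) (hn : n ≠ 1)
    (hA : IsZeroSumSeq (withSum e) A) (i : ι) : n ∣ A.count (∑ i, e i) + A.count (e i) := by
  have hsub : A.toFinset ⊆ insert (∑ i, e i) (Finset.univ.image e) := by
    intro x hx
    simpa using hA.1 x (mem_toFinset.1 hx)
  have hsum := hA.2
  rw [Finset.sum_multiset_count_of_subset A _ hsub, Finset.sum_insert (by simpa using he.ne_sum hn),
    Finset.sum_image (he.injective hn).injOn, Finset.smul_sum, ← Finset.sum_add_distrib] at hsum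
  simp only [← add_smul] at hsum
  have := (he (fun i => A.count (∑ i, e i) + A.count (e i)) 0).1 (by simpa using hsum) i
  exact Nat.modEq_zero_iff_dvd.1 this

lemma eq_mixedSeq_of_count_eq [DecidableEq G] (he : IsIndependentOfOrder n e) (hn : n ≠ 1)
    (hA : ∀ x ∈ A, x ∈ withSum e) (hb : ∀ i, A.count (e i) = b) :
    A = mixedSeq e (A.count (∑ i, e i)) b := by
  ext x
  by_cases hx : x ∈ withSum e
  · obtain rfl | ⟨i, rfl⟩ := hx
    · rw [he.count_mixedSeq_sum hn]
    · rw [he.count_mixedSeq hn, hb]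
  · rw [count_eq_zero_of_notMem fun h => hx (hA x h),
      count_eq_zero_of_notMem fun h => hx (mem_of_mem_mixedSeq h)]

lemma exists_eq_mixedSeq [DecidableEq G] (he : IsIndependentOfOrder n e) (hn : n ≠ 1)
    (hA : IsZeroSumSeq (withSum e) A) (hA₀ : A ≠ 0) (hlt : ∀ x, A.count x < n) :
    ∃ a b, a + b = n ∧ 0 < a ∧ 0 < b ∧ A = mixedSeq e a b := by
  have hdvd := he.dvd_count_add_count hn hA
  have hltsum := hlt (∑ i, e i)
  have hpos : A.count (∑ i, e i) ≠ 0 := by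
    intro h₀
    simp only [h₀, zero_add] at hdvd
    obtain ⟨x, hx⟩ := exists_mem_of_ne_zero hA₀
    refine count_ne_zero.2 hx ?_
    obtain rfl | ⟨i, rfl⟩ := hA.1 x hx
    exacts [h₀, Nat.eq_zero_of_dvd_of_lt (hdvd i) (hlt _)]
  have hcount : ∀ i, A.count (e i) = n - A.count (∑ i, e i) := fun i => by
    have hlti := hlt (e i)
    have := Nat.eq_of_dvd_of_lt_two_mul (by omega) (hdvd i) (by omega)
    omega
  exact ⟨_, _, by omega, by omega, by omega, he.eq_mixedSeq_of_count_eq hn hA.1 hcount⟩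

lemma eq_replicate_or_eq_mixedSeq (he : IsIndependentOfOrder n e) (hn : 1 < n)
    (hA : IsAtomSeq (withSum e) A) :
    (∃ x ∈ withSum e, A = replicate n x) ∨
      ∃ a b, a + b = n ∧ 0 < a ∧ 0 < b ∧ A = mixedSeq e a b := by
  classical
  by_cases hlt : ∀ x, A.count x < n
  · exact .inr (he.exists_eq_mixedSeq hn.ne' hA.1 hA.2.1 hlt)
  · push Not at hlt
    obtain ⟨x, hx⟩ := hlt
    have hmem := hA.1.1 x (count_pos.1 (by omega))
    obtain rfl := he.addOrderOf_eq_of_mem hmem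
    exact .inl ⟨x, hmem,
      hA.eq_replicate_of_addOrderOf_le_count (addOrderOf_pos_iff.1 (by omega)) hx⟩

lemma isAtomSeq_mixedSeq (he : IsIndependentOfOrder n e) (ha : 0 < a) (hb : 0 < b)
    (hab : a + b = n) : IsAtomSeq (withSum e) (mixedSeq e a b) := by
  classical
  have hn : 1 < n := by omega
  have hcount : ∀ x ∈ withSum e, (mixedSeq e a b).count x < n := by
    rintro x (rfl | ⟨i, rfl⟩)
    · rw [he.count_mixedSeq_sum hn.ne']
      omega
    · rw [he.count_mixedSeq hn.ne']
      omega
  have hzero : IsZeroSumSeq (withSum e) (mixedSeq e a b) := by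
    refine ⟨fun x => mem_of_mem_mixedSeq, ?_⟩
    rw [← Multiset.map_id (mixedSeq e a b), sum_map_mixedSeq]
    simp only [id, ← add_nsmul, hab, ← he.addOrderOf_sum, addOrderOf_nsmul_eq_zero]
  have hne : mixedSeq e a b ≠ 0 := by
    intro h
    have := he.count_mixedSeq_sum hn.ne' (a := a) (b := b)
    rw [h, count_zero] at this
    omega
  obtain ⟨A, hle, hA⟩ := hzero.exists_isAtomSeq_le hne
  obtain ⟨x, hx, rfl⟩ | ⟨a', b', hab', -, -, rfl⟩ := he.eq_replicate_or_eq_mixedSeq hn hA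
  · exact absurd (le_count_iff_replicate_le.2 hle) (hcount x hx).not_ge
  · have ha' := count_le_of_le (∑ i, e i) hle
    have hb' := count_le_of_le (e (Classical.arbitrary ι)) hle
    rw [he.count_mixedSeq_sum hn.ne', he.count_mixedSeq_sum hn.ne'] at ha'
    rw [he.count_mixedSeq hn.ne', he.count_mixedSeq hn.ne'] at hb'
    obtain rfl : a' = a := by omega
    obtain rfl : b' = b := by omega
    exact hA

-- Lowering the weight of one `e i₀` from `1` to `1 - k` makes the weights of the `k + 1` elements
-- `e i` sum to `1`, so that every atom has weight `n` modulo `n * k`.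
lemma exists_weight {k : ℕ} (he : IsIndependentOfOrder n e) (hn : 1 < n)
    (hk : Fintype.card ι = k + 1) :
    ∃ w : G → ZMod (n * k), ∀ A, IsAtomSeq (withSum e) A → (A.map w).sum = n := by
  classical
  let i₀ := Classical.arbitrary ι
  let w : G → ZMod (n * k) := fun x => 1 - if x = e i₀ then (k : ZMod (n * k)) else 0
  have hnk : (n : ZMod (n * k)) * k = 0 := by exact_mod_cast ZMod.natCast_self (n * k)
  have hwsum : w (∑ i, e i) = 1 := by simp [w, (he.ne_sum hn.ne' i₀).symm]
  have hsumw : ∑ i, w (e i) = 1 := by simp [w, (he.injective hn.ne').eq_iff, hk]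
  refine ⟨w, fun A hA => ?_⟩
  obtain ⟨x, -, rfl⟩ | ⟨a, b, hab, -, -, rfl⟩ := he.eq_replicate_or_eq_mixedSeq hn hA
  · rw [map_replicate, sum_replicate, nsmul_eq_mul, mul_sub, mul_one, mul_ite, hnk, mul_zero,
      ite_self, sub_zero]
  · rw [sum_map_mixedSeq, hwsum, hsumw, ← add_nsmul, hab, nsmul_one]

lemma isFactorization_pair_mixedSeq (he : IsIndependentOfOrder n e) (hn : 1 < n) :
    IsFactorization (withSum e) (mixedSeq e n n) {mixedSeq e 1 (n - 1), mixedSeq e (n - 1) 1} := by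
  have hsplit : mixedSeq e 1 (n - 1) + mixedSeq e (n - 1) 1 = mixedSeq e n n := by
    rw [mixedSeq_add, Nat.add_sub_cancel' hn.le, Nat.sub_add_cancel hn.le]
  rw [← hsplit]
  exact (IsFactorization.singleton (he.isAtomSeq_mixedSeq (by omega) (by omega)
    (Nat.sub_add_cancel hn.le))).cons
      (he.isAtomSeq_mixedSeq (by omega) (by omega) (Nat.add_sub_cancel' hn.le))

lemma card_sub_one_mem_deltaStar (he : IsIndependentOfOrder n e) (hn : 1 < n) :
    Fintype.card ι - 1 ∈ DeltaStar G := by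
  obtain ⟨k, hk⟩ : ∃ k, Fintype.card ι = k + 1 :=
    ⟨_, (Nat.sub_add_cancel Fintype.card_pos).symm⟩
  have hk₀ : k ≠ 0 := by
    have := Fintype.one_lt_card (α := ι)
    omega
  obtain ⟨w, hw⟩ := he.exists_weight hn hk
  have hord : addOrderOf (n : ZMod (n * k)) = k := addOrderOf_natCast_zmod_mul (by omega) hk₀
  have := addOrderOf_mem_deltaStar hw (addOrderOf_pos_iff.1 (by omega))
    (he.isFactorization_pair_mixedSeq hn) (he.isFactorization_replicate (by omega)) (by
    rw [hord, card_cons, card_map, Finset.card_val, Finset.card_univ, hk]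
    simp only [insert_eq_cons, card_cons, card_singleton]
    omega)
  rwa [hord, ← Nat.add_sub_cancel (n := k) (m := 1), ← hk] at this

end IsIndependentOfOrder

end IndependentFamily

section MinimalDistances

variable {G : Type*} [AddCommGroup G] [Finite G] {p : ℕ}

lemma exists_isIndependentOfOrder (hp : p.Prime) :
    ∃ e : Fin (pRank G p) → G, IsIndependentOfOrder p e := by
  have : Fact p.Prime := ⟨hp⟩
  have : Module (ZMod p) (nsmulAddMonoidHom p : G →+ G).ker :=
    AddCommGroup.zmodModule fun x => Subtype.ext x.2
  obtain ⟨e, he⟩ := exists_linearIndependent_fin_pRank (G := G) (p := p)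
  refine ⟨fun i => e i, fun c d => ⟨fun h i => ?_, fun h => ?_⟩⟩
  · refine (ZMod.natCast_eq_natCast_iff _ _ _).1 (Fintype.linearIndependent_iffₛ.1 he
      (fun i => c i) (fun i => d i) (Subtype.ext ?_) i)
    simpa only [Nat.cast_smul_eq_nsmul, AddSubgroup.val_finsetSum, AddSubgroup.coe_nsmul] using h
  · exact Finset.sum_congr rfl fun i _ => nsmul_eq_nsmul_iff_modEq.2
      ((h i).of_dvd (addOrderOf_dvd_of_nsmul_eq_zero (e i).2))

lemma pRank_sub_one_mem_deltaStar (hp : p.Prime) (h : 2 ≤ pRank G p) :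
    pRank G p - 1 ∈ DeltaStar G := by
  obtain ⟨e, he⟩ := exists_isIndependentOfOrder (G := G) hp
  have : Nontrivial (Fin (pRank G p)) := Fin.nontrivial_iff_two_le.2 h
  simpa using he.card_sub_one_mem_deltaStar hp.one_lt

theorem isGreatest_deltaStar (hG : 2 < Nat.card G) :
    IsGreatest (DeltaStar G) (max (AddMonoid.exponent G - 2) (rankG G - 1)) := by
  obtain ⟨g, hg⟩ := AddMonoid.exists_addOrderOf_eq_exponent (.of_finite (G := G))
  obtain ⟨p, hp, hrank⟩ := exists_prime_rankG_eq G
  have hexp : 3 ≤ AddMonoid.exponent G → AddMonoid.exponent G - 2 ∈ DeltaStar G :=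
    fun h => hg ▸ addOrderOf_sub_two_mem_deltaStar (hg ▸ h)
  have hrk : 2 ≤ rankG G → rankG G - 1 ∈ DeltaStar G :=
    fun h => hrank ▸ pRank_sub_one_mem_deltaStar hp (hrank ▸ h)
  refine ⟨?_, ?_⟩
  · have := three_le_exponent_or_two_le_rankG hG
    obtain hle | hle := le_total (AddMonoid.exponent G - 2) (rankG G - 1)
    · rw [max_eq_right hle]
      exact hrk (by omega)
    · rw [max_eq_left hle]
      exact hexp (by omega)
  · rintro _ ⟨G₀, hG₀, rfl⟩
    exact sInf_deltaSet_le hG₀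

end MinimalDistances

/-- For a finite abelian group `G` with `|G| > 2`,
`max Δ*(G) = max { exp(G) − 2, r(G) − 1 }`. -/
theorem stmt_0 (G : Type*) [AddCommGroup G] [Fintype G] (hG : 2 < Fintype.card G) :
    sSup (DeltaStar G) = max (AddMonoid.exponent G - 2) (rankG G - 1) := by
  rw [← Nat.card_eq_fintype_card] at hG
  exact (isGreatest_deltaStar hG).csSup_eq
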